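/- arXiv:math/0505180 — 6 statements merged into one kernel-verified Lean document; each statement's English description precedes it below -/
import Mathlib

section
/- Let w₁, w₂ ∈ ℝ³ be spacelike vectors for the Minkowski form B, and let x, y ∈ H² satisfy B(wᵢ, x) > 0 and B(wᵢ, y) < 0 for i = 1, 2. Then w₁ + w₂ is spacelike, and moreover B(w₁ + w₂, x) > 0 and B(w₁ + w₂, y) < 0. -/
/-- The Minkowski bilinear form on ℝ³. -/
noncomputable def B (x y : Fin 3 → ℝ) : ℝ := -(x 0 * y 0) + x 1 * y 1 + x 2 * y 2

/-- The hyperboloid model of the hyperbolic plane. -/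
def H2 : Set (Fin 3 → ℝ) := {x | B x x = -1 ∧ 0 < x 0}

/-!
By the Cauchy–Schwarz inequality two vectors of the closed future cone have nonpositive Minkowski
product, and a vector that is not spacelike lies in this cone up to sign. Its products with the
vectors of the cone therefore all have the same weak sign, so a vector having products of both
strict signs is spacelike. Separating `x` from `y` is preserved by sums, hence `w₁ + w₂` is
spacelike.
-/

section Minkowski

open scoped RealInnerProductSpace

variable {E : Type*} [NormedAddCommGroup E] [InnerProductSpace ℝ E]

/-- The Minkowski form on the spacetime `ℝ × E` with time axis `ℝ` and space `E`, in the signature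
where spacelike vectors have positive square. -/
noncomputable def minkowskiForm : LinearMap.BilinForm ℝ (ℝ × E) :=
  (innerₗ E).compl₁₂ (LinearMap.snd ℝ ℝ E) (LinearMap.snd ℝ ℝ E) -
    (LinearMap.mul ℝ ℝ).compl₁₂ (LinearMap.fst ℝ ℝ E) (LinearMap.fst ℝ ℝ E)

/-- The closed future cone: the causal vectors of `ℝ × E` pointing to the future, together
with `0`. -/
def futureCone : Set (ℝ × E) := {v | ‖v.2‖ ≤ v.1}

theorem minkowskiForm_apply (v w : ℝ × E) : minkowskiForm v w = ⟪v.2, w.2⟫ - v.1 * w.1 := rfl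

theorem minkowskiForm_self_nonpos_iff {v : ℝ × E} : minkowskiForm v v ≤ 0 ↔ ‖v.2‖ ≤ |v.1| := by
  rw [minkowskiForm_apply, real_inner_self_eq_norm_sq, ← sq, sub_nonpos, sq_le_sq, abs_norm]

theorem mem_futureCone_iff {v : ℝ × E} :
    v ∈ futureCone ↔ minkowskiForm v v ≤ 0 ∧ 0 ≤ v.1 := by
  rw [minkowskiForm_self_nonpos_iff]
  constructor
  · intro (hv : ‖v.2‖ ≤ v.1)
    exact ⟨hv.trans (le_abs_self _), (norm_nonneg _).trans hv⟩
  · rintro ⟨hv, htime⟩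
    rwa [abs_of_nonneg htime] at hv

theorem mem_futureCone_or_neg_mem {v : ℝ × E} (hv : minkowskiForm v v ≤ 0) :
    v ∈ futureCone ∨ -v ∈ futureCone :=
  (le_abs.mp (minkowskiForm_self_nonpos_iff.mp hv)).imp_right (norm_neg v.2).trans_le

theorem minkowskiForm_nonpos_of_mem_futureCone {v w : ℝ × E}
    (hv : v ∈ futureCone) (hw : w ∈ futureCone) :
    minkowskiForm v w ≤ 0 := by
  rw [minkowskiForm_apply, sub_nonpos]
  calc ⟪v.2, w.2⟫ ≤ ‖v.2‖ * ‖w.2‖ := real_inner_le_norm _ _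
    _ ≤ v.1 * w.1 := mul_le_mul hv hw (norm_nonneg _) ((norm_nonneg _).trans hv)

theorem minkowskiForm_self_pos_of_pos_of_neg {w x y : ℝ × E}
    (hx : x ∈ futureCone) (hy : y ∈ futureCone)
    (hwx : 0 < minkowskiForm w x) (hwy : minkowskiForm w y < 0) :
    0 < minkowskiForm w w := by
  by_contra! hw
  rcases mem_futureCone_or_neg_mem hw with hfuture | hpast
  · exact hwx.not_ge (minkowskiForm_nonpos_of_mem_futureCone hfuture hx)
  · have hneg : -minkowskiForm w y ≤ 0 := by
      simpa only [map_neg, LinearMap.neg_apply] using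
        minkowskiForm_nonpos_of_mem_futureCone hpast hy
    exact hwy.not_ge (neg_nonpos.mp hneg)

theorem sum_of_spacelike_separating_general {w₁ w₂ x y : ℝ × E}
    (hx : x ∈ futureCone) (hy : y ∈ futureCone)
    (h1x : 0 < minkowskiForm w₁ x) (h2x : 0 < minkowskiForm w₂ x)
    (h1y : minkowskiForm w₁ y < 0) (h2y : minkowskiForm w₂ y < 0) :
    0 < minkowskiForm (w₁ + w₂) (w₁ + w₂) ∧
      0 < minkowskiForm (w₁ + w₂) x ∧ minkowskiForm (w₁ + w₂) y < 0 := by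
  have hsum_x : 0 < minkowskiForm (w₁ + w₂) x := by
    simpa only [map_add, LinearMap.add_apply] using add_pos h1x h2x
  have hsum_y : minkowskiForm (w₁ + w₂) y < 0 := by
    simpa only [map_add, LinearMap.add_apply] using add_neg h1y h2y
  exact ⟨minkowskiForm_self_pos_of_pos_of_neg hx hy hsum_x hsum_y, hsum_x, hsum_y⟩

end Minkowski

/-- The splitting of ℝ³ into the time coordinate `x 0` and the Euclidean plane of the space
coordinates `x 1`, `x 2`, which turns `B` into `minkowskiForm`. -/
noncomputable def timeSpaceSplit : (Fin 3 → ℝ) →ₗ[ℝ] ℝ × EuclideanSpace ℝ (Fin 2) :=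
  (LinearMap.proj 0).prod
    ((WithLp.linearEquiv 2 ℝ (Fin 2 → ℝ)).symm.toLinearMap ∘ₗ LinearMap.funLeft ℝ ℝ Fin.succ)

theorem B_eq_minkowskiForm (x y : Fin 3 → ℝ) :
    B x y = minkowskiForm (timeSpaceSplit x) (timeSpaceSplit y) := by
  have hspace : inner ℝ (timeSpaceSplit x).2 (timeSpaceSplit y).2 = x 1 * y 1 + x 2 * y 2 := by
    simp [timeSpaceSplit, PiLp.inner_apply, LinearMap.funLeft, mul_comm]
  have htime (z : Fin 3 → ℝ) : (timeSpaceSplit z).1 = z 0 := rfl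
  rw [minkowskiForm_apply, hspace, htime, htime, B]
  ring

theorem timeSpaceSplit_mem_futureCone {x : Fin 3 → ℝ} (hx : x ∈ H2) :
    timeSpaceSplit x ∈ futureCone := by
  obtain ⟨hself, htime⟩ := hx
  rw [mem_futureCone_iff, ← B_eq_minkowskiForm, hself]
  exact ⟨neg_one_lt_zero.le, htime.le⟩

theorem sum_of_spacelike_separating (w₁ w₂ x y : Fin 3 → ℝ)
    (hw₁ : 0 < B w₁ w₁) (hw₂ : 0 < B w₂ w₂)
    (hx : x ∈ H2) (hy : y ∈ H2)
    (h1x : 0 < B w₁ x) (h2x : 0 < B w₂ x)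
    (h1y : B w₁ y < 0) (h2y : B w₂ y < 0) :
    0 < B (w₁ + w₂) (w₁ + w₂) ∧ 0 < B (w₁ + w₂) x ∧ B (w₁ + w₂) y < 0 := by
  simp only [B_eq_minkowskiForm, map_add timeSpaceSplit] at h1x h2x h1y h2y ⊢
  exact sum_of_spacelike_separating_general (timeSpaceSplit_mem_futureCone hx)
    (timeSpaceSplit_mem_futureCone hy) h1x h2x h1y h2y
end

section
/- Let γ = M(l) and δ = R_θ·M(m)·R_{-θ}. Then trace(δγ) = (1 + cos²θ)·cosh l·cosh m + 2·cos θ·sinh l·sinh m + sin²θ·(cosh l + cosh m) + cos²θ. In particular, if l > 0, m > 0 and 0 < θ ≤ π/2, then trace(δγ) > 3 (so δγ is a hyperbolic element of SO(2,1)). -/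
/-- Hyperbolic translation of length `l` along the standard axis. -/
noncomputable def Mmat (l : ℝ) : Matrix (Fin 3) (Fin 3) ℝ :=
  !![Real.cosh l, Real.sinh l, 0; Real.sinh l, Real.cosh l, 0; 0, 0, 1]

/-- Rotation by angle `θ`. -/
noncomputable def Rmat (θ : ℝ) : Matrix (Fin 3) (Fin 3) ℝ :=
  !![1, 0, 0; 0, Real.cos θ, -Real.sin θ; 0, Real.sin θ, Real.cos θ]

/-!
Under the covering `SL(2, ℝ) → SO₀(2, 1)` the trace of a matrix of half-trace `q` becomes
`4 * q ^ 2 - 1`, and `δγ` lifts to a matrix of half-trace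
`q = cosh (l / 2) * cosh (m / 2) + cos θ * sinh (l / 2) * sinh (m / 2)`.
This `q` is the convex combination of `cosh ((l + m) / 2)` and `cosh ((l - m) / 2)` with weights
`cos (θ / 2) ^ 2` and `sin (θ / 2) ^ 2`, so `q ≥ 1`, and the inequality is strict as soon as one
of the two hyperbolic cosines exceeds `1` and has nonzero weight.
-/

open Matrix Real

/-- Half the trace of the product of two hyperbolic elements of `SL(2, ℝ)` with translation
lengths `l` and `m` whose axes cross at angle `θ`; it stands for the half-trace of a lift of `δγ`
and is given by its explicit formula instead of through the covering map. -/
noncomputable def halfTrace (l m θ : ℝ) : ℝ :=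
  cosh (l / 2) * cosh (m / 2) + cos θ * sinh (l / 2) * sinh (m / 2)

section ConvexCombination

variable {𝕜 : Type*} [Semiring 𝕜] [PartialOrder 𝕜] [IsOrderedRing 𝕜] {a b x y : 𝕜}

theorem one_le_mul_add_mul (ha : 0 ≤ a) (hb : 0 ≤ b) (hab : a + b = 1) (hx : 1 ≤ x)
    (hy : 1 ≤ y) : 1 ≤ a * x + b * y :=
  hab.symm.trans_le <| add_le_add (le_mul_of_one_le_right ha hx) (le_mul_of_one_le_right hb hy)

theorem one_lt_mul_add_mul_iff [IsLeftCancelMulZero 𝕜] [IsCancelAdd 𝕜] (ha : 0 ≤ a)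
    (hb : 0 ≤ b) (hab : a + b = 1) (hx : 1 ≤ x) (hy : 1 ≤ y) :
    1 < a * x + b * y ↔ (a ≠ 0 ∧ 1 < x) ∨ (b ≠ 0 ∧ 1 < y) := by
  have eq_iff : a + b = a * x + b * y ↔ (x = 1 ∨ a = 0) ∧ (y = 1 ∨ b = 0) := by
    rw [add_eq_add_iff_eq_and_eq (le_mul_of_one_le_right ha hx) (le_mul_of_one_le_right hb hy),
      eq_comm (a := a), eq_comm (a := b), mul_right_eq_self₀, mul_right_eq_self₀]
  rw [(one_le_mul_add_mul ha hb hab hx hy).lt_iff_ne, hx.lt_iff_ne, hy.lt_iff_ne, Ne, ← hab,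
    eq_iff, hab, eq_comm (a := x), eq_comm (a := y)]
  tauto

end ConvexCombination

theorem halfTrace_eq_convex_combination (l m θ : ℝ) :
    halfTrace l m θ =
      cos (θ / 2) ^ 2 * cosh ((l + m) / 2) + sin (θ / 2) ^ 2 * cosh ((l - m) / 2) := by
  rw [halfTrace, add_div, sub_div, cosh_add, cosh_sub, cos_sq, sin_sq_eq_half_sub,
    mul_div_cancel₀ θ two_ne_zero]
  ring

theorem one_le_halfTrace (l m θ : ℝ) : 1 ≤ halfTrace l m θ := by
  rw [halfTrace_eq_convex_combination]
  exact one_le_mul_add_mul (sq_nonneg _) (sq_nonneg _) (cos_sq_add_sin_sq _) (one_le_cosh _)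
    (one_le_cosh _)

theorem one_lt_halfTrace_iff (l m θ : ℝ) :
    1 < halfTrace l m θ ↔ (cos (θ / 2) ≠ 0 ∧ l + m ≠ 0) ∨ (sin (θ / 2) ≠ 0 ∧ l ≠ m) := by
  rw [halfTrace_eq_convex_combination, one_lt_mul_add_mul_iff (sq_nonneg _) (sq_nonneg _)
    (cos_sq_add_sin_sq _) (one_le_cosh _) (one_le_cosh _)]
  simp [sub_eq_zero]

theorem Rmat_mul_Mmat_mul_Rmat_neg (m θ : ℝ) :
    Rmat θ * Mmat m * Rmat (-θ) =
      !![cosh m, cos θ * sinh m, sin θ * sinh m;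
        cos θ * sinh m, cos θ ^ 2 * cosh m + sin θ ^ 2, cos θ * sin θ * (cosh m - 1);
        sin θ * sinh m, cos θ * sin θ * (cosh m - 1), sin θ ^ 2 * cosh m + cos θ ^ 2] := by
  ext i j
  fin_cases i <;> fin_cases j <;> simp [Rmat, Mmat, mul_apply, Fin.sum_univ_three] <;> ring

theorem trace_mul_Mmat (A : Matrix (Fin 3) (Fin 3) ℝ) (l : ℝ) :
    trace (A * Mmat l) = (A 0 0 + A 1 1) * cosh l + (A 0 1 + A 1 0) * sinh l + A 2 2 := by
  simp only [Mmat, trace_fin_three, mul_apply, Fin.sum_univ_three, of_apply, cons_val', cons_val,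
    cons_val_fin_one, cons_val_zero, cons_val_one]
  ring

theorem trace_Rmat_mul_Mmat_mul_Rmat_neg_mul_Mmat (l m θ : ℝ) :
    trace ((Rmat θ * Mmat m * Rmat (-θ)) * Mmat l) =
      (1 + cos θ ^ 2) * cosh l * cosh m + 2 * cos θ * sinh l * sinh m +
        sin θ ^ 2 * (cosh l + cosh m) + cos θ ^ 2 := by
  rw [Rmat_mul_Mmat_mul_Rmat_neg, trace_mul_Mmat]
  simp only [of_apply, cons_val', cons_val_zero, cons_val_fin_one, cons_val_one, cons_val]
  ring

theorem trace_eq_four_mul_halfTrace_sq_sub_one (l m θ : ℝ) :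
    trace ((Rmat θ * Mmat m * Rmat (-θ)) * Mmat l) = 4 * halfTrace l m θ ^ 2 - 1 := by
  obtain ⟨a, rfl⟩ : ∃ a, l = 2 * a := ⟨l / 2, by ring⟩
  obtain ⟨b, rfl⟩ : ∃ b, m = 2 * b := ⟨m / 2, by ring⟩
  rw [trace_Rmat_mul_Mmat_mul_Rmat_neg_mul_Mmat, halfTrace, mul_div_cancel_left₀ a two_ne_zero,
    mul_div_cancel_left₀ b two_ne_zero, cosh_two_mul, cosh_two_mul, sinh_two_mul, sinh_two_mul,
    sinh_sq, sinh_sq, sin_sq]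
  have sinh_mul_sinh_sq : (sinh a * sinh b) ^ 2 = (cosh a ^ 2 - 1) * (cosh b ^ 2 - 1) := by
    rw [mul_pow, sinh_sq, sinh_sq]
  linear_combination -4 * cos θ ^ 2 * sinh_mul_sinh_sq

theorem three_lt_trace_iff_one_lt_halfTrace (l m θ : ℝ) :
    3 < trace ((Rmat θ * Mmat m * Rmat (-θ)) * Mmat l) ↔ 1 < halfTrace l m θ := by
  have nonneg : 0 ≤ halfTrace l m θ := zero_le_one.trans (one_le_halfTrace l m θ)
  rw [trace_eq_four_mul_halfTrace_sq_sub_one, ← one_lt_sq_iff₀ nonneg]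
  constructor <;> intro h <;> linarith

theorem trace_of_delta_gamma_general (l m θ : ℝ) :
    trace ((Rmat θ * Mmat m * Rmat (-θ)) * Mmat l) =
      (1 + cos θ ^ 2) * cosh l * cosh m + 2 * cos θ * sinh l * sinh m +
        sin θ ^ 2 * (cosh l + cosh m) + cos θ ^ 2 ∧
    (3 < trace ((Rmat θ * Mmat m * Rmat (-θ)) * Mmat l) ↔
      (cos (θ / 2) ≠ 0 ∧ l + m ≠ 0) ∨ (sin (θ / 2) ≠ 0 ∧ l ≠ m)) :=
  ⟨trace_Rmat_mul_Mmat_mul_Rmat_neg_mul_Mmat l m θ,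
    (three_lt_trace_iff_one_lt_halfTrace l m θ).trans (one_lt_halfTrace_iff l m θ)⟩

theorem trace_of_delta_gamma (l m θ : ℝ) :
    Matrix.trace ((Rmat θ * Mmat m * Rmat (-θ)) * Mmat l) =
      (1 + Real.cos θ ^ 2) * Real.cosh l * Real.cosh m +
        2 * Real.cos θ * Real.sinh l * Real.sinh m +
        Real.sin θ ^ 2 * (Real.cosh l + Real.cosh m) + Real.cos θ ^ 2 ∧
    (0 < l → 0 < m → 0 < θ → θ ≤ Real.pi / 2 →
      3 < Matrix.trace ((Rmat θ * Mmat m * Rmat (-θ)) * Mmat l)) := by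
  refine ⟨(trace_of_delta_gamma_general l m θ).1, fun hl hm hθ₀ hθ => ?_⟩
  exact (trace_of_delta_gamma_general l m θ).2.2 <|
    .inl ⟨(Real.cos_pos_of_mem_Ioo ⟨by linarith, by linarith⟩).ne', by positivity⟩
end

section
/- Let γ = M(l), δ = R_θ·M(m)·R_{-θ}, and let w = (sin θ·(cosh m - 1)·sinh l, -sin θ·(cosh m - 1)·(cosh l + 1), sinh l·sinh m + cos θ·(cosh l + 1)·(cosh m - 1)). Then (δγ)·w = w. Moreover, if l > 0, m > 0 and 0 < θ < π then w ≠ 0, and if additionally θ ≤ π/2 then w is spacelike: B(w,w) > 0. -/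
/-- Generator of the fixed line of `δγ`. -/
noncomputable def wvec (l m θ : ℝ) : Fin 3 → ℝ :=
  ![Real.sin θ * (Real.cosh m - 1) * Real.sinh l,
    -(Real.sin θ * (Real.cosh m - 1) * (Real.cosh l + 1)),
    Real.sinh l * Real.sinh m + Real.cos θ * (Real.cosh l + 1) * (Real.cosh m - 1)]

/-- Generator of the fixed line of the commutator `α = δ⁻¹γ⁻¹δγ`. -/
noncomputable def vvec (l m θ : ℝ) : Fin 3 → ℝ :=
  ![Real.sinh l * Real.sinh m + (Real.cosh l - 1) * (Real.cosh m - 1) * Real.cos θ,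
    -(Real.sinh m * (Real.cosh l - 1)) - Real.sinh l * (Real.cosh m - 1) * Real.cos θ,
    -(Real.sin θ * Real.sinh l * (Real.cosh m - 1))]

/-!
Write `J = diag(-1, 1, 1)`. Then `J * M(l)` is a Lorentz reflection whose mirror is the plane
`(cosh l + 1) x₀ + sinh l x₁ = 0`, so `M(l)` acts on this plane as `J`. Since `J` commutes with
rotations, a vector `w` in the mirror for `l` whose rotation `R_{-θ} w` lies in the mirror for `-m`
satisfies `γ w = J w = δ⁻¹ w`. The vector of the theorem lies in both planes, and every nonzero
vector of a mirror is spacelike because the mirror has a timelike normal.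
-/

open scoped Matrix

/-- The Lorentz reflection `J` reversing the time coordinate `x₀`. -/
def timeReflection : Matrix (Fin 3) (Fin 3) ℝ :=
  Matrix.diagonal ![-1, 1, 1]

/-- The plane on which the boost `Mmat l` agrees with `timeReflection`, that is, the mirror of the
Lorentz reflection `timeReflection * Mmat l`. -/
def mirror (l : ℝ) : Set (Fin 3 → ℝ) :=
  {x | Mmat l *ᵥ x = timeReflection *ᵥ x}

theorem Mmat_mulVec (l : ℝ) (x : Fin 3 → ℝ) :
    Mmat l *ᵥ x =
      ![Real.cosh l * x 0 + Real.sinh l * x 1, Real.sinh l * x 0 + Real.cosh l * x 1, x 2] := by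
  ext i
  fin_cases i <;> simp [Mmat, Matrix.mulVec, dotProduct, Fin.sum_univ_three]

theorem Rmat_mulVec (θ : ℝ) (x : Fin 3 → ℝ) :
    Rmat θ *ᵥ x =
      ![x 0, Real.cos θ * x 1 - Real.sin θ * x 2, Real.sin θ * x 1 + Real.cos θ * x 2] := by
  ext i
  fin_cases i <;> simp [Rmat, Matrix.mulVec, dotProduct, Fin.sum_univ_three, sub_eq_add_neg]

theorem timeReflection_mulVec (x : Fin 3 → ℝ) : timeReflection *ᵥ x = ![-x 0, x 1, x 2] := by
  ext i
  fin_cases i <;> simp [timeReflection, Matrix.mulVec_diagonal]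

theorem Mmat_mul_Mmat_neg (l : ℝ) : Mmat l * Mmat (-l) = 1 := by
  have hcosh_sq := Real.cosh_sq l
  ext i j
  fin_cases i <;> fin_cases j <;> simp [Mmat, Matrix.mul_apply, Fin.sum_univ_three] <;>
    linarith

theorem Rmat_mul_Rmat_neg (θ : ℝ) : Rmat θ * Rmat (-θ) = 1 := by
  have hsin_sq := Real.sin_sq_add_cos_sq θ
  ext i j
  fin_cases i <;> fin_cases j <;> simp [Rmat, Matrix.mul_apply, Fin.sum_univ_three] <;>
    linarith

theorem commute_Rmat_timeReflection (θ : ℝ) : Commute (Rmat θ) timeReflection := by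
  ext i j
  fin_cases i <;> fin_cases j <;> simp [Rmat, timeReflection]

theorem mem_mirror_iff {l : ℝ} {x : Fin 3 → ℝ} :
    x ∈ mirror l ↔ (Real.cosh l + 1) * x 0 + Real.sinh l * x 1 = 0 := by
  rw [mirror, Set.mem_ofPred_eq, Mmat_mulVec, timeReflection_mulVec]
  constructor
  · intro h
    have htime : Real.cosh l * x 0 + Real.sinh l * x 1 = -x 0 := congrFun h 0
    linear_combination htime
  · intro hplane
    have htime : Real.cosh l * x 0 + Real.sinh l * x 1 = -x 0 := by linear_combination hplane
    have hspace : Real.sinh l * x 0 + Real.cosh l * x 1 = x 1 := by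
      have hcosh : Real.cosh l + 1 ≠ 0 := by positivity
      apply mul_left_cancel₀ hcosh
      linear_combination Real.sinh l * hplane + x 1 * Real.cosh_sq l
    rw [htime, hspace]

theorem Mmat_mulVec_timeReflection_of_mem_mirror_neg {m : ℝ} {x : Fin 3 → ℝ}
    (hx : x ∈ mirror (-m)) : Mmat m *ᵥ (timeReflection *ᵥ x) = x := by
  rw [← show Mmat (-m) *ᵥ x = _ from hx, Matrix.mulVec_mulVec, Mmat_mul_Mmat_neg, Matrix.one_mulVec]

theorem mulVec_eq_self_of_mem_mirrors {l m θ : ℝ} {x : Fin 3 → ℝ} (hl : x ∈ mirror l)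
    (hm : Rmat (-θ) *ᵥ x ∈ mirror (-m)) :
    ((Rmat θ * Mmat m * Rmat (-θ)) * Mmat l) *ᵥ x = x :=
  calc ((Rmat θ * Mmat m * Rmat (-θ)) * Mmat l) *ᵥ x
      = Rmat θ *ᵥ (Mmat m *ᵥ (Rmat (-θ) *ᵥ (Mmat l *ᵥ x))) := by
        simp only [Matrix.mulVec_mulVec, Matrix.mul_assoc]
    _ = Rmat θ *ᵥ (Mmat m *ᵥ (timeReflection *ᵥ (Rmat (-θ) *ᵥ x))) := by
        rw [show Mmat l *ᵥ x = _ from hl, Matrix.mulVec_mulVec x (Rmat (-θ)),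
          (commute_Rmat_timeReflection (-θ)).eq, ← Matrix.mulVec_mulVec x]
    _ = Rmat θ *ᵥ (Rmat (-θ) *ᵥ x) := by
        rw [Mmat_mulVec_timeReflection_of_mem_mirror_neg hm]
    _ = x := by rw [Matrix.mulVec_mulVec, Rmat_mul_Rmat_neg, Matrix.one_mulVec]

theorem B_self_pos_of_mem_mirror {l : ℝ} {x : Fin 3 → ℝ} (hx : x ∈ mirror l) (hx0 : x ≠ 0) :
    0 < B x x := by
  have hplane : (Real.cosh l + 1) * x 0 + Real.sinh l * x 1 = 0 := mem_mirror_iff.1 hx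
  have hcosh : 0 < Real.cosh l + 1 := by positivity
  have hB : (Real.cosh l + 1) * B x x = 2 * x 1 ^ 2 + (Real.cosh l + 1) * x 2 ^ 2 := by
    have hscaled : (Real.cosh l + 1) * x 0 ^ 2 = (Real.cosh l - 1) * x 1 ^ 2 := by
      apply mul_left_cancel₀ hcosh.ne'
      linear_combination
        ((Real.cosh l + 1) * x 0 - Real.sinh l * x 1) * hplane - x 1 ^ 2 * Real.cosh_sq l
    unfold B
    linear_combination -hscaled
  refine pos_of_mul_pos_right (hB ▸ ?_) hcosh.le
  have hspatial : x 1 ≠ 0 ∨ x 2 ≠ 0 := by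
    by_contra! h
    have h0 : x 0 = 0 := by simpa [h.1, hcosh.ne'] using hplane
    exact hx0 (by ext i; fin_cases i <;> simp [h0, h])
  rcases hspatial with h | h <;> positivity

theorem wvec_mem_mirror (l m θ : ℝ) : wvec l m θ ∈ mirror l := by
  simp only [mem_mirror_iff, wvec, Matrix.cons_val_zero, Matrix.cons_val_one]
  ring

theorem Rmat_neg_mulVec_wvec_mem_mirror_neg (l m θ : ℝ) :
    Rmat (-θ) *ᵥ wvec l m θ ∈ mirror (-m) := by
  simp only [mem_mirror_iff, Rmat_mulVec, wvec, Matrix.cons_val, Real.cosh_neg, Real.sinh_neg,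
    Real.cos_neg, Real.sin_neg]
  linear_combination Real.sin θ * Real.sinh l * Real.cosh_sq m

theorem wvec_ne_zero {m θ : ℝ} (l : ℝ) (hm : m ≠ 0) (hθ : Real.sin θ ≠ 0) :
    wvec l m θ ≠ 0 := by
  have hcosh_m : Real.cosh m - 1 ≠ 0 := (sub_pos.2 (Real.one_lt_cosh.2 hm)).ne'
  have hcosh_l : Real.cosh l + 1 ≠ 0 := by positivity
  have h1 : wvec l m θ 1 ≠ 0 := neg_ne_zero.2 (mul_ne_zero (mul_ne_zero hθ hcosh_m) hcosh_l)
  exact fun h => h1 (congrFun h 1)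

theorem wvec_fixed_and_spacelike_general (l m θ : ℝ) :
    ((Rmat θ * Mmat m * Rmat (-θ)) * Mmat l).mulVec (wvec l m θ) = wvec l m θ ∧
    (m ≠ 0 → Real.sin θ ≠ 0 → wvec l m θ ≠ 0) ∧
    (wvec l m θ ≠ 0 → 0 < B (wvec l m θ) (wvec l m θ)) :=
  ⟨mulVec_eq_self_of_mem_mirrors (wvec_mem_mirror l m θ)
      (Rmat_neg_mulVec_wvec_mem_mirror_neg l m θ),
    wvec_ne_zero l, B_self_pos_of_mem_mirror (wvec_mem_mirror l m θ)⟩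

theorem wvec_fixed_and_spacelike (l m θ : ℝ) :
    ((Rmat θ * Mmat m * Rmat (-θ)) * Mmat l).mulVec (wvec l m θ) = wvec l m θ ∧
    (0 < l → 0 < m → 0 < θ → θ < Real.pi → wvec l m θ ≠ 0) ∧
    (0 < l → 0 < m → 0 < θ → θ ≤ Real.pi / 2 → 0 < B (wvec l m θ) (wvec l m θ)) := by
  obtain ⟨hfixed, hne, hpos⟩ := wvec_fixed_and_spacelike_general l m θ
  exact ⟨hfixed, fun _ hm h0 hπ => hne hm.ne' (Real.sin_pos_of_pos_of_lt_pi h0 hπ).ne',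
    fun _ hm h0 hθ => hpos (hne hm.ne'
      (Real.sin_pos_of_pos_of_lt_pi h0 (hθ.trans_lt (half_lt_self Real.pi_pos))).ne')⟩
end

section
/- Let l > 0, m > 0, 0 < θ ≤ π/2, γ = M(l), δ = R_θ·M(m)·R_{-θ}, and v = (sinh l·sinh m + (cosh l - 1)(cosh m - 1)·cos θ, -sinh m·(cosh l - 1) - sinh l·(cosh m - 1)·cos θ, -sin θ·sinh l·(cosh m - 1)). Then B((δγ)·v, v) < 0. -/
/-!
Conjugation by `σ = diag(1, -1, -1)` inverts both `γ` and `δ`, so `(σδγ)² = δ⁻¹γ⁻¹δγ = α`, and `v`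
is already fixed by `σδγ`. Hence `δγv = σv`, and `B(σv, v)` is minus the squared Euclidean length
of `v`.

In coordinates, `γ` and `δ` act on `v(l, m)`, up to sign, by reversing one translation length each,
while `σ` reverses both.
-/

open Matrix Real

/-- The half-turn `σ` of the hyperbolic plane about the point `(1, 0, 0)`, where the axes of `γ` and
`δ` cross; it conjugates each of them to its inverse. -/
def halfTurn (x : Fin 3 → ℝ) : Fin 3 → ℝ := ![x 0, -x 1, -x 2]

theorem Mmat_mulVec_vvec (l m θ : ℝ) : Mmat l *ᵥ vvec l m θ = -vvec (-l) m θ := by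
  simp only [Mmat, vvec, cons_mulVec, empty_mulVec, vec3_dotProduct', neg_cons, neg_empty,
    cosh_neg, sinh_neg]
  refine vec3_eq ?_ ?_ ?_
  · linear_combination (cosh m - 1) * cos θ * cosh_sq l
  · linear_combination -sinh m * cosh_sq l
  · ring

theorem Rmat_mulVec_vvec_neg (l m θ : ℝ) : Rmat θ *ᵥ vvec l m (-θ) = vvec m l θ := by
  simp only [Rmat, vvec, cons_mulVec, empty_mulVec, vec3_dotProduct', cos_neg, sin_neg]
  refine vec3_eq ?_ ?_ ?_
  · ring
  · linear_combination -sinh l * (cosh m - 1) * sin_sq_add_cos_sq θ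
  · ring

theorem Rmat_conj_Mmat_mulVec_vvec (l m θ : ℝ) :
    (Rmat θ * Mmat m * Rmat (-θ)) *ᵥ vvec l m θ = -vvec l (-m) θ := by
  have hR : Rmat (-θ) *ᵥ vvec l m θ = vvec m l (-θ) := by
    simpa only [neg_neg] using Rmat_mulVec_vvec_neg l m (-θ)
  calc (Rmat θ * Mmat m * Rmat (-θ)) *ᵥ vvec l m θ
      = Rmat θ *ᵥ Mmat m *ᵥ Rmat (-θ) *ᵥ vvec l m θ := by simp only [mulVec_mulVec, mul_assoc]
    _ = -(Rmat θ *ᵥ vvec (-m) l (-θ)) := by rw [hR, Mmat_mulVec_vvec, mulVec_neg]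
    _ = -vvec l (-m) θ := by rw [Rmat_mulVec_vvec_neg]

theorem Rmat_conj_Mmat_mul_Mmat_mulVec_vvec (l m θ : ℝ) :
    ((Rmat θ * Mmat m * Rmat (-θ)) * Mmat l) *ᵥ vvec l m θ = vvec (-l) (-m) θ := by
  rw [← mulVec_mulVec, Mmat_mulVec_vvec, mulVec_neg, Rmat_conj_Mmat_mulVec_vvec, neg_neg]

theorem vvec_neg_neg (l m θ : ℝ) : vvec (-l) (-m) θ = halfTurn (vvec l m θ) := by
  simp only [vvec, halfTurn, cosh_neg, sinh_neg, cons_val]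
  refine vec3_eq ?_ ?_ ?_ <;> ring

theorem B_halfTurn_self (x : Fin 3 → ℝ) : B (halfTurn x) x = -(x ⬝ᵥ x) := by
  simp only [B, halfTurn, vec3_dotProduct, cons_val]
  ring

theorem cosh_sub_one_lt_abs_sinh {x : ℝ} (hx : x ≠ 0) : cosh x - 1 < |sinh x| := by
  have hexp : rexp (-|x|) < 1 := exp_lt_one_iff.mpr (neg_lt_zero.mpr (abs_pos.mpr hx))
  rw [abs_sinh, ← cosh_abs]
  linarith [cosh_sub_sinh |x|]

theorem vvec_ne_zero {l m : ℝ} (hl : l ≠ 0) (hm : m ≠ 0) (θ : ℝ) : vvec l m θ ≠ 0 := by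
  intro hv
  have hv₀ : sinh l * sinh m + (cosh l - 1) * (cosh m - 1) * cos θ = 0 := congrFun hv 0
  have hcl : 0 ≤ cosh l - 1 := sub_nonneg.mpr (one_le_cosh l)
  have hcm : 0 ≤ cosh m - 1 := sub_nonneg.mpr (one_le_cosh m)
  have hlt : (cosh l - 1) * (cosh m - 1) < |sinh l| * |sinh m| :=
    mul_lt_mul'' (cosh_sub_one_lt_abs_sinh hl) (cosh_sub_one_lt_abs_sinh hm) hcl hcm
  refine hlt.not_ge ?_
  calc |sinh l| * |sinh m| = |(cosh l - 1) * (cosh m - 1) * cos θ| := by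
        rw [← abs_mul, eq_neg_of_add_eq_zero_left hv₀, abs_neg]
    _ = (cosh l - 1) * (cosh m - 1) * |cos θ| := by rw [abs_mul, abs_of_nonneg (mul_nonneg hcl hcm)]
    _ ≤ (cosh l - 1) * (cosh m - 1) :=
        mul_le_of_le_one_right (mul_nonneg hcl hcm) (abs_cos_le_one θ)

theorem deltagamma_v_product_neg_general {l m : ℝ} (hl : l ≠ 0) (hm : m ≠ 0) (θ : ℝ) :
    B (((Rmat θ * Mmat m * Rmat (-θ)) * Mmat l).mulVec (vvec l m θ)) (vvec l m θ) < 0 := by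
  rw [Rmat_conj_Mmat_mul_Mmat_mulVec_vvec, vvec_neg_neg, B_halfTurn_self, neg_lt_zero]
  exact dotProduct_self_star_pos_iff.mpr (vvec_ne_zero hl hm θ)

theorem deltagamma_v_product_neg (l m θ : ℝ)
    (hl : 0 < l) (hm : 0 < m) (hθ : 0 < θ) (hθ' : θ ≤ Real.pi / 2) :
    B (((Rmat θ * Mmat m * Rmat (-θ)) * Mmat l).mulVec (vvec l m θ)) (vvec l m θ) < 0 :=
  deltagamma_v_product_neg_general hl.ne' hm.ne' θ
end

section
/- Let l > 0, m > 0, 0 < θ ≤ π/2, and let w = (sin θ·(cosh m - 1)·sinh l, -sin θ·(cosh m - 1)·(cosh l + 1), sinh l·sinh m + cos θ·(cosh l + 1)·(cosh m - 1)). Then 0 < B(w, (0,0,1))² < B(w, w). (Geometrically: the axis of δγ meets the axis of γ at an angle lying strictly between 0 and π/2, so the ratio r(γ,δ) = cos θ(γδ,δ)/cos θ(γδ,γ) is well defined.) -/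
/-
The vector `e = (0, 0, 1)` is unit spacelike and its orthogonal complement is the Lorentzian plane
of the first two coordinates, so the geodesics dual to `e` and `x` cross when `|x 0| < |x 1|`, and
they then cross at a right angle exactly when `x 2 = 0`. For `w` the first two coordinates are
proportional to `(sinh l, -(cosh l + 1))`, where `|sinh l| < cosh l`, and by the half-argument
formulas the last one is a multiple of `tanh (l / 2) + cos θ * tanh (m / 2)`.
-/

theorem tanh_pos_iff {t : ℝ} : 0 < Real.tanh t ↔ 0 < t := by
  rw [Real.tanh_eq_sinh_div_cosh, div_pos_iff_of_pos_right (Real.cosh_pos t), Real.sinh_pos_iff]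

theorem cosh_add_one_mul_tanh_half (t : ℝ) :
    (Real.cosh t + 1) * Real.tanh (t / 2) = Real.sinh t := by
  obtain ⟨s, rfl⟩ : ∃ s, t = 2 * s := ⟨t / 2, by ring⟩
  rw [mul_div_cancel_left₀ s two_ne_zero, Real.tanh_eq_sinh_div_cosh, Real.cosh_two_mul,
    Real.sinh_two_mul, Real.sinh_sq]
  field_simp
  ring

theorem sinh_mul_tanh_half (t : ℝ) : Real.sinh t * Real.tanh (t / 2) = Real.cosh t - 1 := by
  obtain ⟨s, rfl⟩ : ∃ s, t = 2 * s := ⟨t / 2, by ring⟩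
  rw [mul_div_cancel_left₀ s two_ne_zero, Real.tanh_eq_sinh_div_cosh, Real.cosh_two_mul,
    Real.sinh_two_mul, Real.cosh_sq]
  field_simp
  ring

theorem abs_sinh_lt_cosh (t : ℝ) : |Real.sinh t| < Real.cosh t := by
  rw [Real.abs_sinh, ← Real.cosh_abs]
  exact Real.sinh_lt_cosh |t|

theorem abs_mul_lt_abs_mul_iff_ne_zero {R : Type*} [Ring R] [LinearOrder R] [IsStrictOrderedRing R]
    {a b c : R} (hbc : |b| < |c|) : |a * b| < |a * c| ↔ a ≠ 0 := by
  rw [abs_mul, abs_mul]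
  refine ⟨?_, fun ha => mul_lt_mul_of_pos_left hbc (abs_pos.2 ha)⟩
  rintro h rfl
  simp at h

theorem B_axis (x : Fin 3 → ℝ) : B x ![0, 0, 1] = x 2 := by
  simp [B]

theorem sq_B_axis_lt_B_self_iff (x : Fin 3 → ℝ) :
    B x ![0, 0, 1] ^ 2 < B x x ↔ |x 0| < |x 1| := by
  have pythagoras : B x x = B x ![0, 0, 1] ^ 2 + (x 1 ^ 2 - x 0 ^ 2) := by
    rw [B_axis, B]
    ring
  rw [pythagoras, lt_add_iff_pos_right, sub_pos, sq_lt_sq]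

theorem wvec_two (l m θ : ℝ) :
    wvec l m θ 2 = (Real.cosh l + 1) * Real.sinh m *
      (Real.tanh (l / 2) + Real.cos θ * Real.tanh (m / 2)) := by
  simp only [wvec, Matrix.cons_val]
  rw [← cosh_add_one_mul_tanh_half l, ← sinh_mul_tanh_half m]
  ring

theorem wvec_two_ne_zero_iff (l m θ : ℝ) :
    wvec l m θ 2 ≠ 0 ↔ m ≠ 0 ∧ Real.tanh (l / 2) + Real.cos θ * Real.tanh (m / 2) ≠ 0 := by
  have hl : Real.cosh l + 1 ≠ 0 := by positivity
  rw [wvec_two, mul_assoc, mul_ne_zero_iff_left hl, mul_ne_zero_iff, Real.sinh_ne_zero]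

theorem abs_wvec_zero_lt_abs_wvec_one_iff (l m θ : ℝ) :
    |wvec l m θ 0| < |wvec l m θ 1| ↔ m ≠ 0 ∧ Real.sin θ ≠ 0 := by
  have abs_sinh_lt : |Real.sinh l| < |Real.cosh l + 1| :=
    (abs_sinh_lt_cosh l).trans ((lt_add_one _).trans_le (le_abs_self _))
  have cosh_sub_one_ne_zero : Real.cosh m - 1 ≠ 0 ↔ m ≠ 0 := by
    rw [sub_ne_zero, ← (Real.one_le_cosh m).lt_iff_ne', Real.one_lt_cosh]
  calc |wvec l m θ 0| < |wvec l m θ 1|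
      ↔ |Real.sin θ * (Real.cosh m - 1) * Real.sinh l| <
          |Real.sin θ * (Real.cosh m - 1) * (Real.cosh l + 1)| := by
        simp only [wvec, Matrix.cons_val, abs_neg]
    _ ↔ Real.sin θ * (Real.cosh m - 1) ≠ 0 := abs_mul_lt_abs_mul_iff_ne_zero abs_sinh_lt
    _ ↔ m ≠ 0 ∧ Real.sin θ ≠ 0 := by rw [mul_ne_zero_iff, cosh_sub_one_ne_zero, and_comm]

theorem angle_between_axes_well_defined_general (l m θ : ℝ) :
    (0 < B (wvec l m θ) ![0, 0, 1] ^ 2 ∧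
      B (wvec l m θ) ![0, 0, 1] ^ 2 < B (wvec l m θ) (wvec l m θ)) ↔
    m ≠ 0 ∧ Real.sin θ ≠ 0 ∧ Real.tanh (l / 2) + Real.cos θ * Real.tanh (m / 2) ≠ 0 := by
  rw [sq_B_axis_lt_B_self_iff, abs_wvec_zero_lt_abs_wvec_one_iff, B_axis, sq_pos_iff,
    wvec_two_ne_zero_iff]
  tauto

theorem angle_between_axes_well_defined (l m θ : ℝ)
    (hl : 0 < l) (hm : 0 < m) (hθ : 0 < θ) (hθ' : θ ≤ Real.pi / 2) :
    0 < B (wvec l m θ) ![0, 0, 1] ^ 2 ∧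
    B (wvec l m θ) ![0, 0, 1] ^ 2 < B (wvec l m θ) (wvec l m θ) := by
  have sin_pos : 0 < Real.sin θ := Real.sin_pos_of_pos_of_lt_pi hθ (by linarith [Real.pi_pos])
  have cos_nonneg : 0 ≤ Real.cos θ := Real.cos_nonneg_of_mem_Icc ⟨by linarith, hθ'⟩
  have tanh_sum_pos : 0 < Real.tanh (l / 2) + Real.cos θ * Real.tanh (m / 2) :=
    add_pos_of_pos_of_nonneg (tanh_pos_iff.2 (half_pos hl))
      (mul_nonneg cos_nonneg (tanh_pos_iff.2 (half_pos hm)).le)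
  exact (angle_between_axes_well_defined_general l m θ).2 ⟨hm.ne', sin_pos.ne', tanh_sum_pos.ne'⟩
end

section
/- Let V be a real vector space with a symmetric bilinear form B, let γ, δ : V → V be linear maps preserving B, and let p, q, e_γ, e_δ ∈ V and a, b, c, d ∈ ℝ with γ(e_γ) = e_γ, δ(e_δ) = e_δ, and B(e_γ, e_δ) ≠ 0. If both equations a·(p - δp) + b·q = c·e_γ and a·(p - γp) - b·γ(q) = -d·e_δ hold, then c·B(γ(q), e_γ) = d·B(q, e_δ). (In the geometric setting this is the compatibility condition c/d = cos θ(δ, δγ)/cos θ(γ, δγ) = r(γ,δ) for the solvability of the system.) -/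
/-! If an isometry `f` of `B` fixes `e`, then every displacement `p - f p` is orthogonal to `e`.
Pairing the first equation with `eδ` and the second with `eγ` therefore eliminates `p`, leaving
`b * B q eδ = c * B eγ eδ` and `b * B (γ q) eγ = d * B eδ eγ`. Cross-multiplying eliminates `b`,
and the common factor `B eγ eδ` cancels. -/

section DisplacementEquation

variable {R V : Type*} [CommRing R] [AddCommGroup V] [Module R V]
  {B : LinearMap.BilinForm R V} {f : V → V} {e : V}

theorem bilin_displacement_eq_zero (hf : ∀ x y, B (f x) (f y) = B x y) (he : Function.IsFixedPt f e)
    (x : V) : B (x - f x) e = 0 := by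
  have hx : B (f x) e = B x e := by simpa only [he.eq] using hf x e
  rw [map_sub, LinearMap.sub_apply, hx, sub_self]

theorem mul_bilin_eq_of_smul_displacement_add_smul (hf : ∀ x y, B (f x) (f y) = B x y)
    (he : Function.IsFixedPt f e) {a b c : R} {p u v : V} (h : a • (p - f p) + b • v = c • u) :
    b * B v e = c * B u e := by
  calc
    b * B v e = B (a • (p - f p) + b • v) e := by
      simp only [map_add, map_smul, LinearMap.add_apply, LinearMap.smul_apply, smul_eq_mul,
        bilin_displacement_eq_zero hf he p, mul_zero, zero_add]
    _ = B (c • u) e := by rw [h]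
    _ = c * B u e := LinearMap.BilinForm.smul_left c u e

end DisplacementEquation

theorem cocycle_system_compatibility_general {R V : Type*} [CommRing R] [AddCommGroup V]
    [Module R V] {B : LinearMap.BilinForm R V} (hB : B.IsSymm) {γ δ : V → V}
    (hγ : ∀ x y, B (γ x) (γ y) = B x y) (hδ : ∀ x y, B (δ x) (δ y) = B x y)
    {p q eγ eδ : V} {a b c d : R} (heγ : γ eγ = eγ) (heδ : δ eδ = eδ)
    (hreg : IsLeftRegular (B eγ eδ))
    (h₁ : a • (p - δ p) + b • q = c • eγ)
    (h₂ : a • (p - γ p) - b • γ q = -(d • eδ)) :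
    c * B (γ q) eγ = d * B q eδ := by
  have pair_eδ : b * B q eδ = c * B eγ eδ :=
    mul_bilin_eq_of_smul_displacement_add_smul hδ heδ h₁
  have pair_eγ : b * B (γ q) eγ = d * B eγ eδ := by
    rw [sub_eq_add_neg, ← neg_smul, ← neg_smul] at h₂
    simpa only [neg_mul, neg_inj, hB.eq eδ eγ] using
      mul_bilin_eq_of_smul_displacement_add_smul hγ heγ h₂
  refine hreg ?_
  calc
    B eγ eδ * (c * B (γ q) eγ) = (c * B eγ eδ) * B (γ q) eγ := by ring
    _ = (b * B q eδ) * B (γ q) eγ := by rw [pair_eδ]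
    _ = (b * B (γ q) eγ) * B q eδ := by ring
    _ = (d * B eγ eδ) * B q eδ := by rw [pair_eγ]
    _ = B eγ eδ * (d * B q eδ) := by ring

theorem cocycle_system_compatibility (V : Type*) [AddCommGroup V] [Module ℝ V]
    (B : V →ₗ[ℝ] V →ₗ[ℝ] ℝ) (hsymm : ∀ x y, B x y = B y x)
    (γ δ : V →ₗ[ℝ] V)
    (hγ : ∀ x y, B (γ x) (γ y) = B x y) (hδ : ∀ x y, B (δ x) (δ y) = B x y)
    (p q eγ eδ : V) (a b c d : ℝ)
    (heγ : γ eγ = eγ) (heδ : δ eδ = eδ)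
    (hne : B eγ eδ ≠ 0)
    (h1 : a • (p - δ p) + b • q = c • eγ)
    (h2 : a • (p - γ p) - b • γ q = -(d • eδ)) :
    c * B (γ q) eγ = d * B q eδ :=
  cocycle_system_compatibility_general ⟨hsymm⟩ hγ hδ heγ heδ (IsRegular.of_ne_zero hne).left h1 h2
end
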